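/- arXiv:1410.2623 — 2 statements merged into one kernel-verified Lean document; each statement's English description precedes it below -/
import Mathlib

section
/- Let f(q) = q + ∑_{n=2}^∞ q^n a_n be a quaternionic power series converging on B(0;1) with Re[f'(q)] > 0 for all q ∈ B(0;1). Then (1 - ‖q‖)/(1 + ‖q‖) ≤ Re[f'(q)] ≤ ‖f'(q)‖ ≤ (1 + ‖q‖)/(1 - ‖q‖) for all q ∈ B(0;1). -/
/-!
Embed `ℂ` in `ℍ` as a slice and compose `f'` with the embedding and with the projection of `ℍ` back
onto the slice. The result is a holomorphic function on the unit disc with the same real part as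
`f'`, and its Taylor coefficients are the projections of those of `f'`. Harnack's inequality for
that real part is the lower bound. A Taylor coefficient `b n` of `f'` itself lies in some slice, and
projecting onto this one leaves `b n` unchanged, so Carathéodory's inequality for holomorphic
functions with nonnegative real part gives `‖b n‖ ≤ 2`. Summing the geometric series,
`‖f' q - 1‖ ≤ 2 ‖q‖ / (1 - ‖q‖)`, which is the upper bound.
-/

open Filter Topology Metric Real Complex InnerProductSpace Quaternion
open scoped NNReal ENNReal ComplexConjugate

section Harnack

variable {u : ℂ → ℝ} {c z : ℂ} {R : ℝ}

theorem harnack_le_of_harmonicOnNhd_closedBall (hu : HarmonicOnNhd u (closedBall c R))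
    (hnonneg : ∀ w ∈ sphere c R, 0 ≤ u w) (hz : z ∈ ball c R) :
    (R - ‖z - c‖) / (R + ‖z - c‖) * u c ≤ u z := by
  have hR : |R| = R := abs_of_pos (pos_of_mem_ball hz)
  have hu_cont : ContinuousOn u (sphere c R) := hu.continuousOn.mono sphere_subset_closedBall
  have hker_cont : ContinuousOn (re ∘ herglotzRieszKernel c z) (sphere c R) :=
    continuous_re.comp_continuousOn (hR ▸ continuousOn_herglotzRieszKernel_sphere hz)
  calc (R - ‖z - c‖) / (R + ‖z - c‖) * u c
      = circleAverage (((R - ‖z - c‖) / (R + ‖z - c‖)) • u) c R := by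
        rw [circleAverage_smul, InnerProductSpace.HarmonicOnNhd.circleAverage_eq (hR.symm ▸ hu),
          smul_eq_mul]
    _ ≤ circleAverage ((re ∘ herglotzRieszKernel c z) • u) c R := by
        refine circleAverage_mono (hR.symm ▸ hu_cont.const_smul _).circleIntegrable'
          (hR.symm ▸ hker_cont.smul hu_cont).circleIntegrable' fun w hw ↦ ?_
        rw [hR] at hw
        exact mul_le_mul_of_nonneg_right (le_re_herglotzRieszKernel hw hz) (hnonneg w hw)
    _ = u z := hu.circleAverage_re_herglotzRieszKernel_smul hz

theorem harnack_le_of_harmonicOnNhd_ball (hu : HarmonicOnNhd u (ball c R))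
    (hnonneg : ∀ w ∈ ball c R, 0 ≤ u w) (hz : z ∈ ball c R) :
    (R - ‖z - c‖) / (R + ‖z - c‖) * u c ≤ u z := by
  have hlim : Tendsto (fun r ↦ (r - ‖z - c‖) / (r + ‖z - c‖) * u c) (𝓝[<] R)
      (𝓝 ((R - ‖z - c‖) / (R + ‖z - c‖) * u c)) := by
    have : R + ‖z - c‖ ≠ 0 := by have := pos_of_mem_ball hz; positivity
    refine ContinuousWithinAt.tendsto (ContinuousAt.continuousWithinAt ?_)
    fun_prop (disch := assumption)
  rw [mem_ball_iff_norm] at hz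
  refine le_of_tendsto hlim ?_
  filter_upwards [Ioo_mem_nhdsLT hz] with r ⟨hzr, hrR⟩
  have hsub : closedBall c r ⊆ ball c R := closedBall_subset_ball hrR
  exact harnack_le_of_harmonicOnNhd_closedBall (hu.mono hsub)
    (fun w hw ↦ hnonneg w (hsub (sphere_subset_closedBall hw))) (mem_ball_iff_norm.2 hzr)

end Harnack

section CircleAverage

theorem norm_circleAverage_le {E : Type*} [NormedAddCommGroup E] [NormedSpace ℝ E] (f : ℂ → E)
    (c : ℂ) (r : ℝ) : ‖circleAverage f c r‖ ≤ circleAverage (‖f ·‖) c r := by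
  rw [circleAverage_def, circleAverage_def, norm_smul, smul_eq_mul,
    Real.norm_of_nonneg (by positivity)]
  gcongr
  exact intervalIntegral.norm_integral_le_integral_norm two_pi_pos.le

variable {f : ℂ → ℂ} {c : ℂ} {r : ℝ} {n : ℕ}

theorem norm_div_sub_eq_one_of_mem_sphere {z : ℂ} (hr : 0 < r) (hz : z ∈ sphere c r) :
    ‖(r / (z - c) : ℂ)‖ = 1 := by
  rw [norm_div, mem_sphere_iff_norm.1 hz, norm_real, Real.norm_of_nonneg hr.le, div_self hr.ne']

theorem circleAverage_sub_div_pow_mul_eq_zero (hf : DifferentiableOn ℂ f (closedBall c r))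
    (hr : 0 < r) (hn : n ≠ 0) : circleAverage (fun z ↦ ((z - c) / r) ^ n * f z) c r = 0 := by
  have hdiff : DifferentiableOn ℂ (fun z ↦ ((z - c) / r) ^ n * f z) (closedBall c |r|) := by
    rw [abs_of_pos hr]
    fun_prop
  simpa [hn] using (hdiff.diffContOnCl_ball subset_rfl).circleAverage

theorem circleAverage_div_sub_pow_mul_conj_eq_zero (hf : DifferentiableOn ℂ f (closedBall c r))
    (hr : 0 < r) (hn : n ≠ 0) :
    circleAverage (fun z ↦ (r / (z - c)) ^ n * conj (f z)) c r = 0 := by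
  have hr_abs : |r| = r := abs_of_pos hr
  have hint : CircleIntegrable (fun z ↦ ((z - c) / r) ^ n * f z) c r := by
    have hcont : ContinuousOn f (sphere c |r|) :=
      hr_abs.symm ▸ hf.continuousOn.mono sphere_subset_closedBall
    exact ContinuousOn.circleIntegrable' (by fun_prop)
  calc circleAverage (fun z ↦ (r / (z - c)) ^ n * conj (f z)) c r
      = circleAverage (conjCLE ∘ fun z ↦ ((z - c) / r) ^ n * f z) c r := by
        refine circleAverage_congr_sphere fun z hz ↦ ?_
        rw [hr_abs] at hz
        have hconj : conj ((z - c) / r : ℂ) = r / (z - c) := by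
          rw [← inv_div, map_inv₀, ← inv_eq_conj (norm_div_sub_eq_one_of_mem_sphere hr hz), inv_inv]
        simp only [Function.comp_apply, conjCLE_apply, map_mul, map_pow, hconj]
    _ = conj (circleAverage (fun z ↦ ((z - c) / r) ^ n * f z) c r) :=
        conjCLE.toContinuousLinearMap.circleAverage_comp_comm hint
    _ = 0 := by rw [circleAverage_sub_div_pow_mul_eq_zero hf hr hn, map_zero]

end CircleAverage

section CaratheodoryCoefficient

variable {f : ℂ → ℂ} {p : FormalMultilinearSeries ℂ ℂ ℂ} {c : ℂ} {R r : ℝ≥0} {n : ℕ}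

theorem differentiableOn_closedBall_of_hasFPowerSeriesOnBall (hf : HasFPowerSeriesOnBall f p c R)
    (hrR : r < R) : DifferentiableOn ℂ f (closedBall c r) := by
  refine hf.differentiableOn.mono ?_
  rw [eball_coe]
  exact closedBall_subset_ball hrR

theorem circleAverage_div_sub_pow_mul_eq_coeff_mul_pow (hf : HasFPowerSeriesOnBall f p c R)
    (hr : 0 < r) (hrR : r < R) (n : ℕ) :
    circleAverage (fun z ↦ (r / (z - c)) ^ n * f z) c r = p.coeff n * r ^ n := by
  have hdiff := differentiableOn_closedBall_of_hasFPowerSeriesOnBall hf hrR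
  have hp : p = cauchyPowerSeries f c r :=
    hf.hasFPowerSeriesAt.eq_formalMultilinearSeries
      (hdiff.hasFPowerSeriesOnBall hr).hasFPowerSeriesAt
  calc circleAverage (fun z ↦ (r / (z - c)) ^ n * f z) c r
      = cauchyPowerSeries f c r n fun _ ↦ (r : ℂ) := by
        simp only [circleAverage_eq_circleIntegral (NNReal.coe_ne_zero.2 hr.ne'),
          cauchyPowerSeries_apply, smul_eq_mul, mul_left_comm]
    _ = p.coeff n * r ^ n := by
        rw [← hp, FormalMultilinearSeries.apply_eq_pow_smul_coeff, smul_eq_mul, mul_comm]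

theorem coeff_mul_pow_eq_circleAverage_re (hf : HasFPowerSeriesOnBall f p c R) (hr : 0 < r)
    (hrR : r < R) (hn : n ≠ 0) :
    p.coeff n * r ^ n =
      circleAverage (fun z ↦ (r / (z - c)) ^ n * (2 * (f z).re : ℝ)) c r := by
  have hdiff := differentiableOn_closedBall_of_hasFPowerSeriesOnBall hf hrR
  have hcont : ContinuousOn f (sphere c |(r : ℝ)|) :=
    (NNReal.abs_eq r).symm ▸ hdiff.continuousOn.mono sphere_subset_closedBall
  have hne : ∀ z ∈ sphere c |(r : ℝ)|, z - c ≠ 0 := fun z hz ↦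
    sub_ne_zero.2 (ne_of_mem_sphere hz (by positivity))
  simp only [← add_conj, mul_add]
  rw [circleAverage_fun_add, circleAverage_div_sub_pow_mul_eq_coeff_mul_pow hf hr hrR,
    circleAverage_div_sub_pow_mul_conj_eq_zero hdiff hr hn, add_zero]
  all_goals exact ContinuousOn.circleIntegrable' (by fun_prop (disch := assumption))

theorem norm_coeff_mul_pow_le_of_re_nonneg_sphere (hf : HasFPowerSeriesOnBall f p c R)
    (hr : 0 < r) (hrR : r < R) (hre : ∀ z ∈ sphere c r, 0 ≤ (f z).re) (hn : n ≠ 0) :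
    ‖p.coeff n‖ * r ^ n ≤ 2 * (f c).re := by
  have hdiff : DifferentiableOn ℂ f (closedBall c |(r : ℝ)|) :=
    (NNReal.abs_eq r).symm ▸ differentiableOn_closedBall_of_hasFPowerSeriesOnBall hf hrR
  have hint : CircleIntegrable f c r :=
    (hdiff.continuousOn.mono sphere_subset_closedBall).circleIntegrable'
  calc ‖p.coeff n‖ * r ^ n = ‖p.coeff n * r ^ n‖ := by simp
    _ ≤ circleAverage (fun z ↦ ‖(r / (z - c)) ^ n * ((2 * (f z).re : ℝ) : ℂ)‖) c r := by
        rw [coeff_mul_pow_eq_circleAverage_re hf hr hrR hn]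
        exact norm_circleAverage_le _ _ _
    _ = circleAverage (fun z ↦ (2 : ℝ) • reCLM (f z)) c r := by
        refine circleAverage_congr_sphere fun z hz ↦ ?_
        rw [NNReal.abs_eq] at hz
        have hunit := norm_div_sub_eq_one_of_mem_sphere (NNReal.coe_pos.2 hr) hz
        simp only [norm_mul, norm_pow, hunit, one_pow, one_mul, norm_real, reCLM_apply,
          smul_eq_mul, Real.norm_ofNat, Real.norm_of_nonneg (hre z hz)]
    _ = 2 * (f c).re := by
        rw [circleAverage_fun_smul, ← Function.comp_def reCLM, reCLM.circleAverage_comp_comm hint,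
          (hdiff.diffContOnCl_ball subset_rfl).circleAverage, reCLM_apply, smul_eq_mul]

theorem norm_coeff_mul_pow_le_of_re_nonneg_ball (hf : HasFPowerSeriesOnBall f p c R)
    (hre : ∀ z ∈ ball c R, 0 ≤ (f z).re) (hn : n ≠ 0) :
    ‖p.coeff n‖ * R ^ n ≤ 2 * (f c).re := by
  have hR : (0 : ℝ) < R := mod_cast hf.r_pos
  have hlim : Tendsto (fun r : ℝ ↦ ‖p.coeff n‖ * r ^ n) (𝓝[<] R) (𝓝 (‖p.coeff n‖ * R ^ n)) :=
    (Continuous.tendsto (by fun_prop) _).mono_left nhdsWithin_le_nhds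
  refine le_of_tendsto hlim ?_
  filter_upwards [Ioo_mem_nhdsLT hR] with r ⟨hr, hrR⟩
  lift r to ℝ≥0 using hr.le
  exact norm_coeff_mul_pow_le_of_re_nonneg_sphere hf hr hrR
    (fun z hz ↦ hre z (closedBall_subset_ball hrR (sphere_subset_closedBall hz))) hn

end CaratheodoryCoefficient

section PowerSeries

theorem hasFPowerSeriesOnBall_ofScalars {𝕜 : Type*} [DenselyNormedField 𝕜] {a : ℕ → 𝕜}
    {f : 𝕜 → 𝕜} {R : ℝ≥0} (hR : 0 < R)
    (hf : ∀ z, ‖z‖ < R → HasSum (fun n ↦ z ^ n * a n) (f z)) :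
    HasFPowerSeriesOnBall f (.ofScalars 𝕜 a) 0 R where
  r_le := by
    refine ENNReal.le_of_forall_nnreal_lt fun r hr ↦ ?_
    obtain ⟨w, hrw, hwR⟩ := NormedField.exists_lt_nnnorm_lt 𝕜 (ENNReal.coe_lt_coe.1 hr)
    have hterm := (hf w hwR).summable.tendsto_atTop_zero.norm
    calc (r : ℝ≥0∞) ≤ ‖w‖₊ := ENNReal.coe_le_coe.2 hrw.le
      _ ≤ (FormalMultilinearSeries.ofScalars 𝕜 a).radius :=
        FormalMultilinearSeries.le_radius_of_tendsto _ (l := 0) (by simpa [mul_comm] using hterm)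
  r_pos := mod_cast hR
  hasSum {z} hz := by
    rw [eball_coe, mem_ball_zero_iff] at hz
    simpa [FormalMultilinearSeries.apply_eq_pow_smul_coeff] using hf z hz

variable {A : Type*} [NormedRing A] {b : ℕ → A} {q s : A}

theorem eq_coeff_zero_of_hasSum_zero_pow_mul (hs : HasSum (fun n ↦ 0 ^ n * b n) s) : s = b 0 := by
  refine hs.unique ?_
  simpa using hasSum_single (f := fun n ↦ 0 ^ n * b n) 0 fun n hn ↦ by rw [zero_pow hn, zero_mul]

theorem norm_sub_coeff_zero_le_of_hasSum_pow_mul {C R : ℝ} (hb : ∀ n ≠ 0, ‖b n‖ * R ^ n ≤ C)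
    (hq : ‖q‖ < R) (hs : HasSum (fun n ↦ q ^ n * b n) s) :
    ‖s - b 0‖ ≤ C * ‖q‖ / (R - ‖q‖) := by
  have hR : 0 < R := (norm_nonneg q).trans_lt hq
  have hgeom : HasSum (fun n ↦ C * (‖q‖ / R) * (‖q‖ / R) ^ n)
      (C * (‖q‖ / R) * (1 - ‖q‖ / R)⁻¹) :=
    (hasSum_geometric_of_lt_one (by positivity) ((div_lt_one hR).2 hq)).mul_left _
  have htail : HasSum (fun n ↦ q ^ (n + 1) * b (n + 1)) (s - b 0) := by
    simpa using (hasSum_nat_add_iff' 1).2 hs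
  have hterm (n : ℕ) : ‖q ^ (n + 1) * b (n + 1)‖ ≤ C * (‖q‖ / R) * (‖q‖ / R) ^ n :=
    calc ‖q ^ (n + 1) * b (n + 1)‖
        ≤ ‖q‖ ^ (n + 1) * ‖b (n + 1)‖ := norm_mul_le_of_le (norm_pow_le' q n.succ_pos) le_rfl
      _ = ‖b (n + 1)‖ * R ^ (n + 1) * (‖q‖ / R) ^ (n + 1) := by
          rw [div_pow]
          field_simp
      _ ≤ C * (‖q‖ / R) ^ (n + 1) := by
          gcongr
          exact hb _ n.succ_ne_zero
      _ = C * (‖q‖ / R) * (‖q‖ / R) ^ n := by ring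
  calc ‖s - b 0‖ ≤ C * (‖q‖ / R) * (1 - ‖q‖ / R)⁻¹ := htail.norm_le_of_bounded hgeom hterm
    _ = C * ‖q‖ / (R - ‖q‖) := by
        have : R - ‖q‖ ≠ 0 := (sub_pos.2 hq).ne'
        field_simp

theorem hasSum_natCast_smul_pow_pred_mul_iff [NormedAlgebra ℝ A] {a : ℕ → A} :
    HasSum (fun n : ℕ ↦ (n : ℝ) • (q ^ (n - 1) * a n)) s ↔
      HasSum (fun n : ℕ ↦ q ^ n * ((n + 1 : ℝ) • a (n + 1))) s := by
  rw [← hasSum_nat_add_iff' 1]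
  simp

end PowerSeries

/-- The slices `ℂ_J = ℝ + ℝ J` of `ℍ`, for `J` an imaginary unit. A slice is encoded by the
embedding `x + y * I ↦ x + y * J` of which it is the range, so that quaternionic power series
restrict to slices by composition. -/
abbrev QuaternionSlice := ℂ →ₐ[ℝ] ℍ[ℝ]

namespace QuaternionSlice

theorem exists_apply_eq (q : ℍ[ℝ]) : ∃ (φ : QuaternionSlice) (z : ℂ), φ z = q := by
  obtain him | him := eq_or_ne q.im 0
  · refine ⟨ofComplex, q.re, ?_⟩
    rw [coe_ofComplex, coeComplex_coe]
    simpa [him] using q.re_add_im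
  · have hnorm : ‖q.im‖ ≠ 0 := norm_ne_zero_iff.2 him
    have hsq : q.im * q.im = ((-(‖q.im‖ * ‖q.im‖) : ℝ) : ℍ[ℝ]) := by
      rw [Quaternion.coe_neg, ← normSq_eq_norm_mul_self, ← sq, sq_eq_neg_normSq]
      rfl
    have hJ : (‖q.im‖⁻¹ • q.im) * (‖q.im‖⁻¹ • q.im) = -1 := by
      have hscalar : ‖q.im‖⁻¹ * ‖q.im‖⁻¹ * -(‖q.im‖ * ‖q.im‖) = -1 := by field_simp
      rw [smul_mul_smul_comm, hsq, ← Quaternion.coe_smul, smul_eq_mul, hscalar,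
        Quaternion.coe_neg, Quaternion.coe_one]
    refine ⟨liftAux _ hJ, ⟨q.re, ‖q.im‖⟩, ?_⟩
    rw [liftAux_apply, smul_inv_smul₀ hnorm]
    exact q.re_add_im

variable (φ : QuaternionSlice)

theorem apply_eq_re_add_im_smul (z : ℂ) : φ z = (z.re : ℍ[ℝ]) + z.im • φ I := by
  nth_rw 1 [← Complex.lift.apply_symm_apply φ]
  rfl

theorem re_apply_I : (φ I).re = 0 := by
  have hsq : φ I ^ 2 = -1 := by rw [← map_pow, I_sq, map_neg, map_one]
  have hnormSq : Quaternion.normSq (φ I) = 1 := by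
    rw [normSq_eq_norm_mul_self, ← sq, ← norm_pow, hsq, norm_neg, norm_one]
  rw [← sq_eq_neg_normSq, hsq, hnormSq, Quaternion.coe_one]

theorem re_apply_mul (z : ℂ) (b : ℍ[ℝ]) :
    (φ z * b).re = z.re * b.re + z.im * (φ I * b).re := by
  rw [apply_eq_re_add_im_smul, add_mul, smul_mul_assoc, Quaternion.re_add, Quaternion.re_smul,
    coe_mul_eq_smul, Quaternion.re_smul, smul_eq_mul, smul_eq_mul]

theorem re_apply (z : ℂ) : (φ z).re = z.re := by
  simpa [re_apply_I] using re_apply_mul φ z 1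

theorem star_apply (z : ℂ) : star (φ z) = φ (conj z) := by
  rw [star_eq_two_re_sub, re_apply, sub_eq_iff_eq_add, ← map_add, add_comm, add_conj]
  exact (φ.commutes _).symm

theorem norm_apply (z : ℂ) : ‖φ z‖ = ‖z‖ := by
  rw [← sq_eq_sq₀ (norm_nonneg _) (norm_nonneg _), sq, ← normSq_eq_norm_mul_self,
    Quaternion.normSq_def, star_apply, ← map_mul, re_apply, mul_conj, ofReal_re, normSq_eq_norm_sq]

/-- The projection of `ℍ` onto the slice `φ`, with values in `ℂ`: writing `b = φ z + φ w * K` with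
an imaginary unit `K` orthogonal to the slice, it sends `b` to `z`. In these terms it picks the
first component of a function in the splitting lemma. -/
noncomputable def proj : ℍ[ℝ] →L[ℝ] ℂ :=
  LinearMap.toContinuousLinearMap
    { toFun b := ⟨b.re, -(φ I * b).re⟩
      map_add' b b' := by
        simp only [mul_add, Quaternion.re_add, neg_add]
        rfl
      map_smul' r b := by
        simp [Complex.ext_iff, -Quaternion.re_mul] }

theorem re_proj (b : ℍ[ℝ]) : (φ.proj b).re = b.re := rfl

theorem im_proj (b : ℍ[ℝ]) : (φ.proj b).im = -(φ I * b).re := rfl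

theorem proj_apply_mul (z : ℂ) (b : ℍ[ℝ]) : φ.proj (φ z * b) = z * φ.proj b := by
  apply Complex.ext
  · rw [re_proj, re_apply_mul, mul_re, re_proj, im_proj, mul_neg, sub_neg_eq_add]
  · rw [im_proj, ← mul_assoc, ← map_mul, re_apply_mul, I_mul_re, I_mul_im, mul_im, im_proj, re_proj]
    ring

theorem proj_apply (z : ℂ) : φ.proj (φ z) = z := by
  apply Complex.ext
  · rw [re_proj, re_apply]
  · rw [im_proj, ← map_mul, re_apply, I_mul_re, neg_neg]

theorem hasFPowerSeriesOnBall_proj_comp {f : ℍ[ℝ] → ℍ[ℝ]} {b : ℕ → ℍ[ℝ]} {R : ℝ≥0} (hR : 0 < R)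
    (hf : ∀ q, ‖q‖ < R → HasSum (fun n ↦ q ^ n * b n) (f q)) :
    HasFPowerSeriesOnBall (fun z ↦ φ.proj (f (φ z))) (.ofScalars ℂ fun n ↦ φ.proj (b n)) 0 R := by
  refine hasFPowerSeriesOnBall_ofScalars hR fun z hz ↦ ?_
  have hproj := (hf (φ z) (by rwa [φ.norm_apply])).mapL φ.proj
  simpa only [← map_pow, φ.proj_apply_mul] using hproj

end QuaternionSlice

section QuaternionSeries

variable {f : ℍ[ℝ] → ℍ[ℝ]} {b : ℕ → ℍ[ℝ]} {R : ℝ}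

theorem quaternion_harnack_le_of_hasSum_pow_mul
    (hf : ∀ q, ‖q‖ < R → HasSum (fun n ↦ q ^ n * b n) (f q))
    (hre : ∀ q, ‖q‖ < R → 0 ≤ (f q).re) {q : ℍ[ℝ]} (hq : ‖q‖ < R) :
    (R - ‖q‖) / (R + ‖q‖) * (b 0).re ≤ (f q).re := by
  have hR : 0 < R := (norm_nonneg q).trans_lt hq
  lift R to ℝ≥0 using hR.le
  obtain ⟨φ, z, rfl⟩ := QuaternionSlice.exists_apply_eq q
  have hharm : HarmonicOnNhd (fun w ↦ (f (φ w)).re) (ball 0 R) := fun w hw ↦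
    ((φ.hasFPowerSeriesOnBall_proj_comp hR hf).analyticAt_of_mem (by rwa [eball_coe])).harmonicAt_re
  have hnonneg : ∀ w ∈ ball (0 : ℂ) R, 0 ≤ (f (φ w)).re := fun w hw ↦
    hre _ (by rwa [φ.norm_apply, ← mem_ball_zero_iff])
  have hzero : f 0 = b 0 := eq_coeff_zero_of_hasSum_zero_pow_mul (hf 0 (by rwa [norm_zero]))
  rw [φ.norm_apply] at hq ⊢
  simpa [hzero] using harnack_le_of_harmonicOnNhd_ball hharm hnonneg (mem_ball_zero_iff.2 hq)

theorem quaternion_norm_coeff_mul_pow_le_of_re_nonneg (hR : 0 < R)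
    (hf : ∀ q, ‖q‖ < R → HasSum (fun n ↦ q ^ n * b n) (f q))
    (hre : ∀ q, ‖q‖ < R → 0 ≤ (f q).re) {n : ℕ} (hn : n ≠ 0) :
    ‖b n‖ * R ^ n ≤ 2 * (b 0).re := by
  lift R to ℝ≥0 using hR.le
  obtain ⟨φ, w, hw⟩ := QuaternionSlice.exists_apply_eq (b n)
  have hnonneg : ∀ z ∈ ball (0 : ℂ) R, 0 ≤ (φ.proj (f (φ z))).re := fun z hz ↦
    hre _ (by rwa [φ.norm_apply, ← mem_ball_zero_iff])
  have hzero : f 0 = b 0 := eq_coeff_zero_of_hasSum_zero_pow_mul (hf 0 (by rwa [norm_zero]))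
  have hcoeff : ‖φ.proj (b n)‖ = ‖b n‖ := by rw [← hw, φ.proj_apply, φ.norm_apply]
  simpa [FormalMultilinearSeries.coeff_ofScalars, hcoeff, φ.re_proj, hzero] using
    norm_coeff_mul_pow_le_of_re_nonneg_ball (φ.hasFPowerSeriesOnBall_proj_comp hR hf) hnonneg hn

theorem quaternion_norm_sub_coeff_zero_le_of_re_nonneg
    (hf : ∀ q, ‖q‖ < R → HasSum (fun n ↦ q ^ n * b n) (f q))
    (hre : ∀ q, ‖q‖ < R → 0 ≤ (f q).re) {q : ℍ[ℝ]} (hq : ‖q‖ < R) :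
    ‖f q - b 0‖ ≤ 2 * (b 0).re * ‖q‖ / (R - ‖q‖) :=
  have hR : 0 < R := (norm_nonneg q).trans_lt hq
  norm_sub_coeff_zero_le_of_hasSum_pow_mul
    (fun _ ↦ quaternion_norm_coeff_mul_pow_le_of_re_nonneg hR hf hre) hq (hf q hq)

end QuaternionSeries

theorem quaternion_re_le_norm (q : ℍ[ℝ]) : q.re ≤ ‖q‖ := by
  simpa [Quaternion.inner_def] using real_inner_le_norm q 1

/-- Carathéodory-type distortion estimate: if `f(q) = q + ∑_{n≥2} qⁿ aₙ` converges on the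
unit ball and `Re f'(q) > 0` there, then
`(1-‖q‖)/(1+‖q‖) ≤ Re f'(q) ≤ ‖f'(q)‖ ≤ (1+‖q‖)/(1-‖q‖)`. -/
theorem stmt2 (a : ℕ → Quaternion ℝ) (ha0 : a 0 = 0) (ha1 : a 1 = 1)
    (hconv : ∀ q : Quaternion ℝ, ‖q‖ < 1 → Summable (fun n : ℕ => q ^ n * a n))
    (hconv' : ∀ q : Quaternion ℝ, ‖q‖ < 1 →
      Summable (fun n : ℕ => (n : ℝ) • (q ^ (n - 1) * a n)))
    (hpos : ∀ q : Quaternion ℝ, ‖q‖ < 1 →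
      0 < (∑' n : ℕ, (n : ℝ) • (q ^ (n - 1) * a n)).re) :
    ∀ q : Quaternion ℝ, ‖q‖ < 1 →
      (1 - ‖q‖) / (1 + ‖q‖) ≤ (∑' n : ℕ, (n : ℝ) • (q ^ (n - 1) * a n)).re ∧
      (∑' n : ℕ, (n : ℝ) • (q ^ (n - 1) * a n)).re ≤
        ‖∑' n : ℕ, (n : ℝ) • (q ^ (n - 1) * a n)‖ ∧
      ‖∑' n : ℕ, (n : ℝ) • (q ^ (n - 1) * a n)‖ ≤ (1 + ‖q‖) / (1 - ‖q‖) := by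
  intro q hq
  set f : ℍ[ℝ] → ℍ[ℝ] := fun q ↦ ∑' n : ℕ, (n : ℝ) • (q ^ (n - 1) * a n)
  set b : ℕ → ℍ[ℝ] := fun n ↦ (n + 1 : ℝ) • a (n + 1)
  have hf (q : ℍ[ℝ]) (hq : ‖q‖ < 1) : HasSum (fun n ↦ q ^ n * b n) (f q) :=
    hasSum_natCast_smul_pow_pred_mul_iff.1 (hconv' q hq).hasSum
  have hre (q : ℍ[ℝ]) (hq : ‖q‖ < 1) : 0 ≤ (f q).re := (hpos q hq).le
  have hb : b 0 = 1 := by simp [b, ha1]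
  have hlower := quaternion_harnack_le_of_hasSum_pow_mul hf hre hq
  have hdist := quaternion_norm_sub_coeff_zero_le_of_re_nonneg hf hre hq
  rw [hb, Quaternion.re_one, mul_one] at hlower hdist
  refine ⟨hlower, quaternion_re_le_norm _, ?_⟩
  calc ‖f q‖ ≤ ‖(1 : ℍ[ℝ])‖ + ‖f q - 1‖ := norm_le_norm_add_norm_sub' _ _
    _ ≤ 1 + 2 * ‖q‖ / (1 - ‖q‖) := by rw [norm_one]; gcongr
    _ = (1 + ‖q‖) / (1 - ‖q‖) := by
        have : 1 - ‖q‖ ≠ 0 := (sub_pos.2 hq).ne'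
        field_simp
        ring
end

section
/- Let f(q) = ∑_{k=1}^∞ q^k a_k and g(q) = ∑_{k=1}^∞ q^k b_k be quaternionic power series converging on B(0;1), and suppose there exists a power series w(q) = ∑ q^n c_n with all c_n real, converging on B(0;1), with w(0) = 0 and ‖w(q)‖ < 1 for all q ∈ B(0;1), such that f(q) = g(w(q)) on B(0;1). Then for every n ≥ 1: ∑_{k=1}^n ‖a_k‖² ≤ ∑_{k=1}^n ‖b_k‖² (Rogosinski's inequality). -/
/-!
The squared norm of a coefficient is the sum of the squares of its orthonormal coordinates, and
restricting to real `q` turns the coordinates of `f` and `g` into real power series with the same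
`w`; by complexification this leaves `f = g ∘ w` with complex `f`, `g` and `w`. Write `w = z v`;
by the Schwarz lemma `|v| ≤ 1`. If `g = g(0) + z g₁`, then `f = g(0) + z v (g₁ ∘ w)`. By Parseval's
identity on circles, multiplication by `v` does not increase the sum of the squared moduli of the
first `N` Taylor coefficients, so the inequality for `N + 1` coefficients of `f` and `g` follows
from the one for `N` coefficients of `g₁ ∘ w` and `g₁`.
-/

open Filter Metric Real Set
open scoped InnerProductSpace Nat Polynomial Quaternion Topology

section TaylorCoefficients

variable {𝕜 : Type*} [NontriviallyNormedField 𝕜]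

/-- The `n`-th Taylor coefficient of `f` at `0`, which is the coefficient of `zⁿ` when `f` is
analytic there. It allows power series to be compared without carrying their coefficient
sequences. -/
noncomputable def taylorCoeff (f : 𝕜 → 𝕜) (n : ℕ) : 𝕜 :=
  iteratedDeriv n f 0 / n !

@[simp]
theorem taylorCoeff_zero (f : 𝕜 → 𝕜) : taylorCoeff f 0 = f 0 := by
  simp [taylorCoeff]

theorem taylorCoeff_congr {f g : 𝕜 → 𝕜} (h : f =ᶠ[𝓝 0] g) :
    taylorCoeff f = taylorCoeff g :=
  funext fun n => by rw [taylorCoeff, taylorCoeff, (h.iteratedDeriv n).self_of_nhds]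

theorem hasFPowerSeriesAt_ofScalars {f : 𝕜 → 𝕜} {a : ℕ → 𝕜}
    (h : ∀ᶠ z in 𝓝 0, HasSum (fun n => a n * z ^ n) (f z)) :
    HasFPowerSeriesAt f (.ofScalars 𝕜 a) 0 := by
  simpa [hasFPowerSeriesAt_iff, mul_comm] using h

variable [CompleteSpace 𝕜] [CharZero 𝕜]

theorem coeff_eq_taylorCoeff {f : 𝕜 → 𝕜} {p : FormalMultilinearSeries 𝕜 𝕜 𝕜}
    (hp : HasFPowerSeriesAt f p 0) (n : ℕ) : p.coeff n = taylorCoeff f n := by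
  rw [hp.eq_formalMultilinearSeries hp.analyticAt.hasFPowerSeriesAt,
    FormalMultilinearSeries.coeff_ofScalars, taylorCoeff]

theorem taylorCoeff_eq_of_hasSum {f : 𝕜 → 𝕜} {a : ℕ → 𝕜}
    (h : ∀ᶠ z in 𝓝 0, HasSum (fun n => a n * z ^ n) (f z)) : taylorCoeff f = a :=
  funext fun n => by
    rw [← coeff_eq_taylorCoeff (hasFPowerSeriesAt_ofScalars h),
      FormalMultilinearSeries.coeff_ofScalars]

theorem taylorCoeff_succ {f : 𝕜 → 𝕜} (hf : AnalyticAt 𝕜 f 0) (n : ℕ) :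
    taylorCoeff f (n + 1) = taylorCoeff (dslope f 0) n := by
  obtain ⟨p, hp⟩ := hf
  rw [← coeff_eq_taylorCoeff hp, ← coeff_eq_taylorCoeff hp.has_fpower_series_dslope_fslope,
    FormalMultilinearSeries.coeff_fslope]

theorem taylorCoeff_mul {f g : 𝕜 → 𝕜} (hf : AnalyticAt 𝕜 f 0) (hg : AnalyticAt 𝕜 g 0) (n : ℕ) :
    taylorCoeff (f * g) n =
      ∑ k ∈ Finset.range (n + 1), taylorCoeff f k * taylorCoeff g (n - k) := by
  rw [taylorCoeff, iteratedDeriv_mul hf.contDiffAt hg.contDiffAt, Finset.sum_div]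
  refine Finset.sum_congr rfl fun k hk => ?_
  have hkn : (n.choose k * k ! * (n - k)! : 𝕜) = n ! := by
    exact_mod_cast Nat.choose_mul_factorial_mul_factorial (Finset.mem_range_succ_iff.1 hk)
  have hfact (m : ℕ) : (m ! : 𝕜) ≠ 0 := Nat.cast_ne_zero.2 m.factorial_ne_zero
  rw [taylorCoeff, taylorCoeff, div_mul_div_comm, div_eq_div_iff (hfact n)
    (mul_ne_zero (hfact k) (hfact (n - k))), ← hkn]
  ring

end TaylorCoefficients

theorem sum_range_sq_norm_eq_circleAverage (a : ℕ → ℂ) (N : ℕ) :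
    ∑ n ∈ Finset.range N, ‖a n‖ ^ 2 =
      circleAverage (fun z => ‖∑ n ∈ Finset.range N, a n * z ^ n‖ ^ 2) 0 1 := by
  let p : ℂ[X] := ∑ n ∈ Finset.range N, Polynomial.monomial n (a n)
  have hp_eval (z : ℂ) : p.eval z = ∑ n ∈ Finset.range N, a n * z ^ n := by
    simp [p, Polynomial.eval_finsetSum]
  have hp_coeff (n : ℕ) : p.coeff n = if n < N then a n else 0 := by
    simp [p, Polynomial.finsetSum_coeff, Polynomial.coeff_monomial]
  have hp_support : p.support ⊆ Finset.range N := fun n hn => by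
    simp only [Polynomial.mem_support_iff, hp_coeff, ne_eq, ite_eq_right_iff, not_forall] at hn
    exact Finset.mem_range.2 hn.1
  calc ∑ n ∈ Finset.range N, ‖a n‖ ^ 2
      = ∑ n ∈ Finset.range N, ‖p.coeff n‖ ^ 2 :=
        Finset.sum_congr rfl fun n hn => by rw [hp_coeff, if_pos (Finset.mem_range.1 hn)]
    _ = ∑ n ∈ p.support, ‖p.coeff n‖ ^ 2 :=
        (p.sum_eq_of_subset (fun _ c => ‖c‖ ^ 2) (by simp) hp_support).symm
    _ = circleAverage (fun z => ‖∑ n ∈ Finset.range N, a n * z ^ n‖ ^ 2) 0 1 := by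
        simp only [p.sum_sq_norm_coeff_eq_circleAverage, hp_eval]

theorem hasSum_sq_norm_circleAverage {a : ℕ → ℂ} (ha : Summable fun n => ‖a n‖) :
    HasSum (fun n => ‖a n‖ ^ 2) (circleAverage (fun z => ‖∑' n, a n * z ^ n‖ ^ 2) 0 1) := by
  have norm_term {z : ℂ} (hz : ‖z‖ = 1) (n : ℕ) : ‖a n * z ^ n‖ = ‖a n‖ := by simp [hz]
  have norm_partialSum_le (N : ℕ) {z : ℂ} (hz : ‖z‖ = 1) :
      ‖∑ n ∈ Finset.range N, a n * z ^ n‖ ≤ ∑' n, ‖a n‖ :=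
    (norm_sum_le _ _).trans <| by
      simpa only [norm_term hz] using ha.sum_le_tsum (Finset.range N) fun n _ => norm_nonneg (a n)
  have tendsto_partialSum {z : ℂ} (hz : ‖z‖ = 1) :
      Tendsto (fun N => ∑ n ∈ Finset.range N, a n * z ^ n) atTop (𝓝 (∑' n, a n * z ^ n)) :=
    (Summable.of_norm (by simpa only [norm_term hz] using ha)).hasSum.tendsto_sum_nat
  rw [hasSum_iff_tendsto_nat_of_nonneg fun n => sq_nonneg ‖a n‖]
  simp only [sum_range_sq_norm_eq_circleAverage]
  unfold circleAverage
  refine (intervalIntegral.tendsto_integral_filter_of_dominated_convergence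
    (fun _ => (∑' n, ‖a n‖) ^ 2) (.of_forall fun N => ?_) (.of_forall fun N => ?_) (by simp)
    (.of_forall fun θ _ => ?_)).const_smul _
  · exact Continuous.aestronglyMeasurable (by fun_prop)
  · refine .of_forall fun θ _ => ?_
    rw [norm_pow, norm_norm]
    gcongr
    exact norm_partialSum_le N (by simp)
  · exact (tendsto_partialSum (by simp)).norm.pow 2

theorem hasSum_taylorCoeff {f : ℂ → ℂ} {R : ℝ} (hf : DifferentiableOn ℂ f (ball 0 R)) {z : ℂ}
    (hz : z ∈ ball 0 R) : HasSum (fun n => taylorCoeff f n * z ^ n) (f z) := by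
  have term_eq (n : ℕ) :
      (n ! : ℂ)⁻¹ • (z - 0) ^ n • iteratedDeriv n f 0 = taylorCoeff f n * z ^ n := by
    simp only [taylorCoeff, sub_zero, smul_eq_mul]
    ring
  simpa only [term_eq] using Complex.hasSum_taylorSeries_on_ball hf hz

theorem hasSum_sq_norm_taylorCoeff {f : ℂ → ℂ} {r R : ℝ} (hf : DifferentiableOn ℂ f (ball 0 R))
    (hr0 : 0 ≤ r) (hrR : r < R) :
    HasSum (fun n => (‖taylorCoeff f n‖ * r ^ n) ^ 2) (circleAverage (fun z => ‖f z‖ ^ 2) 0 r) := by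
  have hmem {z : ℂ} (hz : ‖z‖ = 1) : (r : ℂ) * z ∈ ball 0 R := by
    simpa [hz, abs_of_nonneg hr0] using hrR
  have hsum : Summable fun n => ‖taylorCoeff f n * (r : ℂ) ^ n‖ :=
    (hasSum_taylorCoeff hf (by simpa using hmem norm_one)).summable.norm
  convert hasSum_sq_norm_circleAverage hsum using 1
  · simp [abs_of_nonneg hr0]
  · rw [circleAverage_eq_circleAverage_zero_one]
    refine circleAverage_congr_sphere fun z hz => ?_
    have hz1 : ‖z‖ = 1 := by simpa using hz
    simp only [add_zero, ← (hasSum_taylorCoeff hf (hmem hz1)).tsum_eq, mul_pow, mul_assoc]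

theorem sum_sq_norm_taylorCoeff_mul_le_of_differentiableOn {v p : ℂ → ℂ}
    (hv : DifferentiableOn ℂ v (ball 0 1)) (hv_le : ∀ z ∈ ball (0 : ℂ) 1, ‖v z‖ ≤ 1)
    (hp : DifferentiableOn ℂ p (ball 0 1)) {N : ℕ} (hp_zero : ∀ n, N ≤ n → taylorCoeff p n = 0) :
    ∑ n ∈ Finset.range N, ‖taylorCoeff (v * p) n‖ ^ 2 ≤
      ∑ n ∈ Finset.range N, ‖taylorCoeff p n‖ ^ 2 := by
  have le_on_circle {r : ℝ} (hr : r ∈ Ioo (0 : ℝ) 1) :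
      ∑ n ∈ Finset.range N, (‖taylorCoeff (v * p) n‖ * r ^ n) ^ 2 ≤
        ∑ n ∈ Finset.range N, (‖taylorCoeff p n‖ * r ^ n) ^ 2 := by
    have hsub : sphere (0 : ℂ) |r| ⊆ ball 0 1 :=
      sphere_subset_closedBall.trans (closedBall_subset_ball (by rw [abs_of_pos hr.1]; exact hr.2))
    have integrable {h : ℂ → ℂ} (hh : DifferentiableOn ℂ h (ball 0 1)) :
        CircleIntegrable (fun z => ‖h z‖ ^ 2) 0 r :=
      ((hh.continuousOn.mono hsub).norm.pow 2).circleIntegrable'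
    have hvp := hasSum_sq_norm_taylorCoeff (hv.mul hp) hr.1.le hr.2
    have hp' := hasSum_sq_norm_taylorCoeff hp hr.1.le hr.2
    calc ∑ n ∈ Finset.range N, (‖taylorCoeff (v * p) n‖ * r ^ n) ^ 2
        ≤ circleAverage (fun z => ‖(v * p) z‖ ^ 2) 0 r :=
          sum_le_hasSum _ (fun n _ => sq_nonneg _) hvp
      _ ≤ circleAverage (fun z => ‖p z‖ ^ 2) 0 r := by
          refine circleAverage_mono (integrable (hv.mul hp)) (integrable hp) fun z hz => ?_
          rw [Pi.mul_apply, norm_mul]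
          gcongr
          exact mul_le_of_le_one_left (norm_nonneg _) (hv_le z (hsub hz))
      _ = ∑ n ∈ Finset.range N, (‖taylorCoeff p n‖ * r ^ n) ^ 2 :=
          hp'.unique <| hasSum_sum_of_ne_finset_zero fun n hn => by
            simp [hp_zero n (by simpa using hn)]
  have tendsto_one (h : ℂ → ℂ) :
      Tendsto (fun r : ℝ => ∑ n ∈ Finset.range N, (‖taylorCoeff h n‖ * r ^ n) ^ 2) (𝓝[<] 1)
        (𝓝 (∑ n ∈ Finset.range N, ‖taylorCoeff h n‖ ^ 2)) :=
    (Continuous.tendsto' (by fun_prop) _ _ (by simp)).mono_left nhdsWithin_le_nhds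
  exact le_of_tendsto_of_tendsto (tendsto_one _) (tendsto_one _)
    (mem_of_superset (Ioo_mem_nhdsLT zero_lt_one) fun r hr => le_on_circle hr)

theorem sum_sq_norm_taylorCoeff_mul_le {v h : ℂ → ℂ} (hv : DifferentiableOn ℂ v (ball 0 1))
    (hv_le : ∀ z ∈ ball (0 : ℂ) 1, ‖v z‖ ≤ 1) (hh : AnalyticAt ℂ h 0) (N : ℕ) :
    ∑ n ∈ Finset.range N, ‖taylorCoeff (v * h) n‖ ^ 2 ≤
      ∑ n ∈ Finset.range N, ‖taylorCoeff h n‖ ^ 2 := by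
  -- The first `N` coefficients of `v * h` depend only on the first `N` coefficients of `h`, so `h`
  -- may be replaced by its Taylor polynomial, which is defined on the whole disc.
  let p : ℂ → ℂ := fun z => ∑ n ∈ Finset.range N, taylorCoeff h n * z ^ n
  have hp : Differentiable ℂ p := by fun_prop
  have hp_coeff (n : ℕ) : taylorCoeff p n = if n < N then taylorCoeff h n else 0 := by
    let a : ℕ → ℂ := fun n => if n < N then taylorCoeff h n else 0
    have hp_eq (z : ℂ) : p z = ∑ n ∈ Finset.range N, a n * z ^ n :=
      Finset.sum_congr rfl fun n hn => by simp only [a, if_pos (Finset.mem_range.1 hn)]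
    refine congrFun (taylorCoeff_eq_of_hasSum (a := a) (.of_forall fun z => ?_)) n
    rw [hp_eq]
    exact hasSum_sum_of_ne_finset_zero fun n hn => by
      simp only [a, if_neg (Finset.mem_range.not.1 hn), zero_mul]
  have hp_coeff_of_lt {n : ℕ} (hn : n < N) : taylorCoeff p n = taylorCoeff h n := by
    rw [hp_coeff, if_pos hn]
  have hv_analytic : AnalyticAt ℂ v 0 := hv.analyticAt (ball_mem_nhds 0 one_pos)
  have hmul {n : ℕ} (hn : n < N) : taylorCoeff (v * h) n = taylorCoeff (v * p) n := by
    rw [taylorCoeff_mul hv_analytic hh, taylorCoeff_mul hv_analytic (hp.analyticAt 0)]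
    exact Finset.sum_congr rfl fun k _ => by rw [hp_coeff_of_lt (by omega)]
  calc ∑ n ∈ Finset.range N, ‖taylorCoeff (v * h) n‖ ^ 2
      = ∑ n ∈ Finset.range N, ‖taylorCoeff (v * p) n‖ ^ 2 :=
        Finset.sum_congr rfl fun n hn => by rw [hmul (Finset.mem_range.1 hn)]
    _ ≤ ∑ n ∈ Finset.range N, ‖taylorCoeff p n‖ ^ 2 :=
        sum_sq_norm_taylorCoeff_mul_le_of_differentiableOn hv hv_le hp.differentiableOn
          fun n hn => by rw [hp_coeff, if_neg hn.not_gt]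
    _ = ∑ n ∈ Finset.range N, ‖taylorCoeff h n‖ ^ 2 :=
        Finset.sum_congr rfl fun n hn => by rw [hp_coeff_of_lt (Finset.mem_range.1 hn)]

theorem dslope_comp_eq_mul {𝕜 : Type*} [NontriviallyNormedField 𝕜] {g w : 𝕜 → 𝕜} {a : 𝕜}
    (hg : DifferentiableAt 𝕜 g (w a)) (hw : DifferentiableAt 𝕜 w a) :
    dslope (g ∘ w) a = dslope w a * (dslope g (w a) ∘ w) := by
  funext z
  rcases eq_or_ne z a with rfl | hz
  · simp [deriv_comp z hg hw, mul_comm]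
  · refine mul_left_cancel₀ (sub_ne_zero.2 hz) ?_
    rw [Pi.mul_apply, ← mul_assoc]
    simp only [← smul_eq_mul, sub_smul_dslope, Function.comp_apply]

theorem sum_sq_norm_taylorCoeff_comp_le {w : ℂ → ℂ} (hw : DifferentiableOn ℂ w (ball 0 1))
    (hw_le : ∀ z ∈ ball (0 : ℂ) 1, ‖w z‖ ≤ 1) (hw0 : w 0 = 0) {g : ℂ → ℂ}
    (hg : AnalyticAt ℂ g 0) (N : ℕ) :
    ∑ n ∈ Finset.range N, ‖taylorCoeff (g ∘ w) n‖ ^ 2 ≤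
      ∑ n ∈ Finset.range N, ‖taylorCoeff g n‖ ^ 2 := by
  have hball : ball (0 : ℂ) 1 ∈ 𝓝 0 := ball_mem_nhds 0 one_pos
  have hw_analytic : AnalyticAt ℂ w 0 := hw.analyticAt hball
  have comp_analytic {h : ℂ → ℂ} (hh : AnalyticAt ℂ h 0) : AnalyticAt ℂ (h ∘ w) 0 :=
    AnalyticAt.comp (by rwa [hw0]) hw_analytic
  have dslope_differentiable : DifferentiableOn ℂ (dslope w 0) (ball 0 1) :=
    (Complex.differentiableOn_dslope hball).2 hw
  have dslope_le (z : ℂ) (hz : z ∈ ball 0 1) : ‖dslope w 0 z‖ ≤ 1 := by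
    simpa using Complex.norm_dslope_le_div_of_mapsTo_ball hw
      (fun z hz => by simpa [hw0] using hw_le z hz) hz
  induction N generalizing g with
  | zero => simp
  | succ N ih =>
    have hg_dslope : AnalyticAt ℂ (dslope g 0) 0 :=
      let ⟨_, hp⟩ := hg
      hp.has_fpower_series_dslope_fslope.analyticAt
    have hdslope : dslope (g ∘ w) 0 = dslope w 0 * (dslope g 0 ∘ w) := by
      simpa only [hw0] using dslope_comp_eq_mul (a := 0)
        (by rw [hw0]; exact hg.differentiableAt) hw_analytic.differentiableAt
    simp only [Finset.sum_range_succ', taylorCoeff_succ hg, taylorCoeff_succ (comp_analytic hg),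
      taylorCoeff_zero, Function.comp_apply, hw0, hdslope]
    gcongr ?_ + _
    exact (sum_sq_norm_taylorCoeff_mul_le dslope_differentiable dslope_le
      (comp_analytic hg_dslope) N).trans (ih hg_dslope)

theorem differentiableOn_tsum_mul_pow {c : ℕ → ℂ} {R : ℝ}
    (hc : ∀ z ∈ ball (0 : ℂ) R, Summable fun n => c n * z ^ n) :
    DifferentiableOn ℂ (fun z => ∑' n, c n * z ^ n) (ball 0 R) := by
  intro z hz
  obtain ⟨r, hzr, hrR⟩ := exists_between (mem_ball_zero_iff.1 hz)
  have hr0 : 0 ≤ r := (norm_nonneg z).trans hzr.le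
  have hsum : Summable fun n => ‖c n * (r : ℂ) ^ n‖ :=
    (hc r (by simpa [abs_of_nonneg hr0] using hrR)).norm
  have hdiff : DifferentiableOn ℂ (fun z => ∑' n, c n * z ^ n) (ball 0 r) := by
    refine Complex.differentiableOn_tsum_of_summable_norm hsum (fun n => by fun_prop) isOpen_ball
      fun n x hx => ?_
    rw [norm_mul, norm_mul, norm_pow, norm_pow, Complex.norm_real, Real.norm_of_nonneg hr0]
    gcongr
    exact (mem_ball_zero_iff.1 hx).le
  exact (hdiff.differentiableAt
    (isOpen_ball.mem_nhds (mem_ball_zero_iff.2 hzr))).differentiableWithinAt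

theorem ofReal_tsum_mul_pow (a : ℕ → ℝ) (t : ℝ) :
    ((∑' n, a n * t ^ n : ℝ) : ℂ) = ∑' n, (a n : ℂ) * (t : ℂ) ^ n := by
  simp only [Complex.ofReal_tsum, Complex.ofReal_mul, Complex.ofReal_pow]

theorem eventually_hasSum_ofReal_mul_pow {a : ℕ → ℝ}
    (ha : ∀ᶠ t : ℝ in 𝓝 0, Summable fun n => a n * t ^ n) :
    ∀ᶠ z : ℂ in 𝓝 0, HasSum (fun n => (a n : ℂ) * z ^ n) (∑' n, (a n : ℂ) * z ^ n) := by
  filter_upwards [tendsto_norm_zero.eventually ha] with z hz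
  refine (Summable.of_norm ?_).hasSum
  simpa using hz.norm

theorem eventuallyEq_of_eventually_ofReal {F G : ℂ → ℂ} {x : ℝ} (hF : AnalyticAt ℂ F x)
    (hG : AnalyticAt ℂ G x) (h : ∀ᶠ t : ℝ in 𝓝 x, F t = G t) : F =ᶠ[𝓝 (x : ℂ)] G := by
  have tendsto_ofReal : Tendsto ((↑) : ℝ → ℂ) (𝓝[≠] x) (𝓝[≠] (x : ℂ)) :=
    Complex.continuous_ofReal.continuousAt.continuousWithinAt.tendsto_nhdsWithin
      fun t ht => by simpa using ht
  exact (hF.frequently_eq_iff_eventually_eq hG).1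
    (tendsto_ofReal.frequently (h.filter_mono nhdsWithin_le_nhds).frequently)

theorem sum_sq_le_of_eventually_comp {a b : ℕ → ℝ} {v : ℝ → ℝ} {w : ℂ → ℂ}
    (hw : DifferentiableOn ℂ w (ball 0 1)) (hw_le : ∀ z ∈ ball (0 : ℂ) 1, ‖w z‖ ≤ 1)
    (hw0 : w 0 = 0) (hwv : ∀ᶠ t : ℝ in 𝓝 0, w t = v t)
    (ha : ∀ᶠ t : ℝ in 𝓝 0, Summable fun n => a n * t ^ n)
    (hb : ∀ᶠ t : ℝ in 𝓝 0, Summable fun n => b n * t ^ n)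
    (hab : ∀ᶠ t : ℝ in 𝓝 0, ∑' n, a n * t ^ n = ∑' n, b n * v t ^ n) (N : ℕ) :
    ∑ n ∈ Finset.range N, a n ^ 2 ≤ ∑ n ∈ Finset.range N, b n ^ 2 := by
  let F : ℂ → ℂ := fun z => ∑' n, (a n : ℂ) * z ^ n
  let G : ℂ → ℂ := fun z => ∑' n, (b n : ℂ) * z ^ n
  have hF := eventually_hasSum_ofReal_mul_pow ha
  have hG := eventually_hasSum_ofReal_mul_pow hb
  have hF_analytic : AnalyticAt ℂ F 0 := (hasFPowerSeriesAt_ofScalars hF).analyticAt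
  have hG_analytic : AnalyticAt ℂ G 0 := (hasFPowerSeriesAt_ofScalars hG).analyticAt
  have hGw_analytic : AnalyticAt ℂ (G ∘ w) 0 :=
    AnalyticAt.comp (by rwa [hw0]) (hw.analyticAt (ball_mem_nhds 0 one_pos))
  have hFG : F =ᶠ[𝓝 0] G ∘ w := by
    rw [← Complex.ofReal_zero] at hF_analytic hGw_analytic ⊢
    refine eventuallyEq_of_eventually_ofReal hF_analytic hGw_analytic ?_
    filter_upwards [hwv, hab] with t hwt habt
    simp only [F, G, Function.comp_apply, hwt, ← ofReal_tsum_mul_pow, habt]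
  have := sum_sq_norm_taylorCoeff_comp_le hw hw_le hw0 hG_analytic N
  rw [← taylorCoeff_congr hFG, taylorCoeff_eq_of_hasSum hF, taylorCoeff_eq_of_hasSum hG] at this
  simpa using this

theorem sum_sq_norm_le_of_forall_inner {𝕜 E ι : Type*} [RCLike 𝕜] [NormedAddCommGroup E]
    [InnerProductSpace 𝕜 E] {a b : ι → E} {s : Finset ι}
    (h : ∀ e : E, ∑ i ∈ s, ‖⟪e, a i⟫_𝕜‖ ^ 2 ≤ ∑ i ∈ s, ‖⟪e, b i⟫_𝕜‖ ^ 2) :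
    ∑ i ∈ s, ‖a i‖ ^ 2 ≤ ∑ i ∈ s, ‖b i‖ ^ 2 := by
  let V : Submodule 𝕜 E := Submodule.span 𝕜 (a '' s ∪ b '' s)
  have : FiniteDimensional 𝕜 V :=
    FiniteDimensional.span_of_finite 𝕜 ((s.finite_toSet.image a).union (s.finite_toSet.image b))
  let e := stdOrthonormalBasis 𝕜 V
  have sum_sq_norm {x : ι → E} (hx : ∀ i ∈ s, x i ∈ V) :
      ∑ i ∈ s, ‖x i‖ ^ 2 = ∑ j, ∑ i ∈ s, ‖⟪(e j : E), x i⟫_𝕜‖ ^ 2 := by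
    rw [Finset.sum_comm]
    exact Finset.sum_congr rfl fun i hi => (e.sum_sq_norm_inner_right ⟨x i, hx i hi⟩).symm
  rw [sum_sq_norm fun i hi => Submodule.subset_span (.inl (mem_image_of_mem a hi)),
    sum_sq_norm fun i hi => Submodule.subset_span (.inr (mem_image_of_mem b hi))]
  exact Finset.sum_le_sum fun j _ => h (e j)

theorem hasSum_inner_mul_pow {E : Type*} [NormedAddCommGroup E] [InnerProductSpace ℝ E]
    {a : ℕ → E} {t : ℝ} (ha : Summable fun k => t ^ k • a k) (e : E) :
    HasSum (fun k => ⟪e, a k⟫_ℝ * t ^ k) ⟪e, ∑' k, t ^ k • a k⟫_ℝ := by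
  simpa [real_inner_smul_right, mul_comm] using (innerSL ℝ e).hasSum ha.hasSum

theorem stmt14_general {E : Type*} [NormedAddCommGroup E] [InnerProductSpace ℝ E]
    (a b : ℕ → E) (c : ℕ → ℝ) (hc0 : c 0 = 0)
    (hw : ∀ z : ℂ, ‖z‖ < 1 → Summable fun n => (c n : ℂ) * z ^ n)
    (hw_lt : ∀ z : ℂ, ‖z‖ < 1 → ‖∑' n, (c n : ℂ) * z ^ n‖ < 1)
    (ha : ∀ᶠ t : ℝ in 𝓝 0, Summable fun k => t ^ k • a k)
    (hb : ∀ᶠ t : ℝ in 𝓝 0, Summable fun k => t ^ k • b k)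
    (hab : ∀ᶠ t : ℝ in 𝓝 0, ∑' k, t ^ k • a k = ∑' k, (∑' n, c n * t ^ n) ^ k • b k) (N : ℕ) :
    ∑ k ∈ Finset.range N, ‖a k‖ ^ 2 ≤ ∑ k ∈ Finset.range N, ‖b k‖ ^ 2 := by
  let w : ℂ → ℂ := fun z => ∑' n, (c n : ℂ) * z ^ n
  let v : ℝ → ℝ := fun t => ∑' n, c n * t ^ n
  have hwv (t : ℝ) : w t = v t := (ofReal_tsum_mul_pow c t).symm
  have hw0 : w 0 = 0 :=
    (tsum_eq_single 0 fun n hn => by simp [hn]).trans (by simp [hc0])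
  have hw_diff : DifferentiableOn ℂ w (ball 0 1) :=
    differentiableOn_tsum_mul_pow fun z hz => hw z (mem_ball_zero_iff.1 hz)
  have hw_tendsto : Tendsto w (𝓝 0) (𝓝 0) := by
    simpa only [hw0] using
      (hw_diff.differentiableAt (ball_mem_nhds 0 one_pos)).continuousAt.tendsto
  have hv_tendsto : Tendsto v (𝓝 0) (𝓝 0) := by
    rw [← tendsto_ofReal_iff, Complex.ofReal_zero]
    simpa only [Function.comp_def, hwv] using
      hw_tendsto.comp (Complex.continuous_ofReal.tendsto' 0 0 Complex.ofReal_zero)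
  refine sum_sq_norm_le_of_forall_inner (𝕜 := ℝ) fun e => ?_
  simp only [Real.norm_eq_abs, sq_abs]
  refine sum_sq_le_of_eventually_comp hw_diff
    (fun z hz => (hw_lt z (mem_ball_zero_iff.1 hz)).le) hw0
    (.of_forall hwv) (ha.mono fun t ht => (hasSum_inner_mul_pow ht e).summable)
    (hb.mono fun t ht => (hasSum_inner_mul_pow ht e).summable) ?_ N
  filter_upwards [ha, hv_tendsto.eventually hb, hab] with t hat hbt habt
  rw [(hasSum_inner_mul_pow hat e).tsum_eq, (hasSum_inner_mul_pow hbt e).tsum_eq, habt]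

theorem norm_quaternion_coeComplex (z : ℂ) : ‖(z : ℍ)‖ = ‖z‖ := by
  rw [norm_eq_sqrt_real_inner, Quaternion.inner_self, Quaternion.normSq_def',
    Complex.norm_eq_sqrt_sq_add_sq]
  simp

theorem quaternion_coeComplex_ofReal_mul_pow (r : ℝ) (z : ℂ) (n : ℕ) :
    ((r * z ^ n : ℂ) : ℍ) = r • (z : ℍ) ^ n := by
  rw [← Complex.real_smul]
  simp only [← Quaternion.coe_ofComplex, map_smul, map_pow]

theorem summable_smul_quaternion_coeComplex_pow {c : ℕ → ℝ} {z : ℂ} :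
    Summable (fun n => c n • (z : ℍ) ^ n) ↔ Summable fun n => (c n : ℂ) * z ^ n := by
  rw [← summable_norm_iff, ← summable_norm_iff (f := fun n => (c n : ℂ) * z ^ n)]
  simp only [← quaternion_coeComplex_ofReal_mul_pow, norm_quaternion_coeComplex]

theorem tsum_smul_quaternion_coeComplex_pow (c : ℕ → ℝ) (z : ℂ) :
    ∑' n, c n • (z : ℍ) ^ n = ((∑' n, (c n : ℂ) * z ^ n : ℂ) : ℍ) := by
  have isometry :=
    AddMonoidHomClass.isometry_of_norm Quaternion.ofComplex norm_quaternion_coeComplex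
  simp only [← quaternion_coeComplex_ofReal_mul_pow]
  exact (isometry.isClosedEmbedding.map_tsum _ (g := Quaternion.ofComplex)).symm

theorem tsum_smul_quaternion_coe_pow (c : ℕ → ℝ) (t : ℝ) :
    ∑' n, c n • (t : ℍ) ^ n = ((∑' n, c n * t ^ n : ℝ) : ℍ) := by
  simp only [← Quaternion.tsum_coe, Quaternion.coe_mul, Quaternion.coe_pow,
    Quaternion.coe_mul_eq_smul]

theorem quaternion_coe_pow_mul (t : ℝ) (k : ℕ) (x : ℍ) : (t : ℍ) ^ k * x = t ^ k • x := by
  rw [← Quaternion.coe_pow, Quaternion.coe_mul_eq_smul]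

/-- Rogosinski's inequality: if `f(q) = ∑_{k≥1} qᵏ aₖ`, `g(q) = ∑_{k≥1} qᵏ bₖ` converge on
the unit ball and `f = g ∘ w` for a power series `w` with real coefficients, `w(0) = 0`,
`‖w(q)‖ < 1` on the ball, then `∑_{k=1}^n ‖aₖ‖² ≤ ∑_{k=1}^n ‖bₖ‖²` for all `n ≥ 1`. -/
theorem stmt14 (a b : ℕ → Quaternion ℝ) (ha0 : a 0 = 0) (hb0 : b 0 = 0)
    (hfa : ∀ q : Quaternion ℝ, ‖q‖ < 1 → Summable (fun k : ℕ => q ^ k * a k))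
    (hgb : ∀ q : Quaternion ℝ, ‖q‖ < 1 → Summable (fun k : ℕ => q ^ k * b k))
    (c : ℕ → ℝ) (hc0 : c 0 = 0)
    (hw : ∀ q : Quaternion ℝ, ‖q‖ < 1 → Summable (fun n : ℕ => c n • q ^ n))
    (hwlt : ∀ q : Quaternion ℝ, ‖q‖ < 1 → ‖∑' n : ℕ, c n • q ^ n‖ < 1)
    (hsub : ∀ q : Quaternion ℝ, ‖q‖ < 1 →
      (∑' k : ℕ, q ^ k * a k) = ∑' k : ℕ, (∑' n : ℕ, c n • q ^ n) ^ k * b k) :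
    ∀ n : ℕ, 1 ≤ n →
      ∑ k ∈ Finset.Icc 1 n, ‖a k‖ ^ 2 ≤ ∑ k ∈ Finset.Icc 1 n, ‖b k‖ ^ 2 := by
  intro n _
  have hball : ∀ᶠ t : ℝ in 𝓝 0, ‖(t : ℍ)‖ < 1 := by
    simpa using eventually_norm_sub_lt (0 : ℝ) one_pos
  have h := stmt14_general a b c hc0
    (fun z => by
      simpa only [norm_quaternion_coeComplex, summable_smul_quaternion_coeComplex_pow] using hw z)
    (fun z => by
      simpa only [norm_quaternion_coeComplex, tsum_smul_quaternion_coeComplex_pow] using hwlt z)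
    (hball.mono fun t ht => by simpa only [quaternion_coe_pow_mul] using hfa t ht)
    (hball.mono fun t ht => by simpa only [quaternion_coe_pow_mul] using hgb t ht)
    (hball.mono fun t ht => by
      simpa only [tsum_smul_quaternion_coe_pow, quaternion_coe_pow_mul] using hsub t ht)
    (n + 1)
  simpa [Finset.sum_range_eq_add_Ico _ n.succ_pos, Finset.Ico_add_one_right_eq_Icc, ha0, hb0]
    using h
end
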